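/- arXiv:1203.6648 — 2 statements merged into one kernel-verified Lean document; each statement's English description precedes it below -/
import Mathlib

section
/- Let p be an odd prime dividing the odd square-free positive integer d, and let S = diag(1,...,1,-d) be an (n+1)×(n+1) matrix. Then the number E_{p²}(S) of matrices M over ℤ/p² with Mᵀ S M = S equals 2 · p^{(n+1)(n+2)/2} · |O(n, ℤ/p)|, where O(n, ℤ/p) is the group of n×n matrices A over ℤ/p with Aᵀ A = I. -/
open Matrix

namespace Aux

lemma card_lt (n : ℕ) : Fintype.card {x : Fin n × Fin n // x.1 < x.2} = n * (n - 1) / 2 := by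
  have e : {x : Fin n × Fin n // x.1 < x.2} ≃ Σ j : Fin n, Fin (j : ℕ) :=
    { toFun := fun x => ⟨x.1.2, ⟨x.1.1, x.2⟩⟩
      invFun := fun y => ⟨(⟨y.2, y.2.2.trans y.1.2⟩, y.1), y.2.2⟩
      left_inv := fun x => rfl
      right_inv := fun y => rfl }
  rw [Fintype.card_congr e, Fintype.card_sigma]
  simp only [Fintype.card_fin]
  rw [Fin.sum_univ_eq_sum_range (fun i => i) n, Finset.sum_range_id]

variable {F : Type*} [Field F] [Fintype F] {R : Type*} [CommRing R] [Fintype R]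

/-- skew solutions -/
lemma card_skew (h2 : (2 : F) ≠ 0) (n : ℕ) (B : Matrix (Fin n) (Fin n) F) (hB : Bᵀ = B) :
    Nat.card {W : Matrix (Fin n) (Fin n) F // W + Wᵀ = B} =
      Nat.card F ^ (n * (n - 1) / 2) := by
  have hB' : ∀ i j, B i j = B j i := fun i j => by
    conv_lhs => rw [← hB]
    rfl
  have e : {W : Matrix (Fin n) (Fin n) F // W + Wᵀ = B} ≃
      ({x : Fin n × Fin n // x.1 < x.2} → F) :=
    { toFun := fun W x => W.1 x.1.1 x.1.2
      invFun := fun f => ⟨Matrix.of fun i j => if h : i < j then f ⟨(i, j), h⟩ else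
          if h : j < i then B i j - f ⟨(j, i), h⟩ else B i j / 2, by
        ext i j
        simp only [Matrix.add_apply, Matrix.transpose_apply, Matrix.of_apply]
        rcases lt_trichotomy i j with h | h | h
        · simp [h, h.not_gt, hB' i j]
        · subst h; simp; field_simp; norm_num
        · simp [h, h.not_gt]⟩
      left_inv := fun W => by
        ext i j
        have hW : W.1 i j + W.1 j i = B i j := by
          have := congrFun (congrFun W.2 i) j
          simpa using this
        simp only [Matrix.of_apply]
        rcases lt_trichotomy i j with h | h | h
        · simp [h]
        · subst h; simp; rw [← hW]; field_simp; norm_num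
        · simp [h, h.not_gt, ← hW]
      right_inv := fun f => by
        ext x
        simp [x.2] }
  rw [Nat.card_congr e, Nat.card_fun, Nat.card_eq_fintype_card (α := {x : Fin n × Fin n // x.1 < x.2}),
    card_lt]

/-- decomposition -/
noncomputable def dec (π : R →+* F) (ϖ : R) (hz : ∀ r, ϖ * r = 0 ↔ π r = 0)
    (hk : ∀ r, π r = 0 → ∃ s, r = ϖ * s) (hpi : π ϖ = 0) (σ : F → R) (hσ : ∀ a, π (σ a) = a) :
    F × F ≃ R :=
  Equiv.ofBijective (fun x => σ x.1 + ϖ * σ x.2) (by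
    constructor
    · rintro ⟨a, x⟩ ⟨b, y⟩ h
      have h1 := congrArg π h
      simp [hσ, hpi] at h1
      subst h1
      have h2 : ϖ * (σ x - σ y) = 0 := by
        have := add_left_cancel h
        rw [mul_sub, sub_eq_zero]; exact this
      rw [hz] at h2
      simp [hσ, sub_eq_zero] at h2
      rw [h2]
    · intro r
      obtain ⟨s, hs⟩ := hk (r - σ (π r)) (by simp [hσ])
      refine ⟨(π r, π s), ?_⟩
      have : ϖ * (s - σ (π s)) = 0 := by rw [hz]; simp [hσ]
      simp only
      linear_combination (-1 : R) * hs - this)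

lemma card_sq (h2 : (2 : F) ≠ 0) (π : R →+* F) (ϖ : R) (hz : ∀ r, ϖ * r = 0 ↔ π r = 0)
    (hk : ∀ r, π r = 0 → ∃ s, r = ϖ * s) (hpi : π ϖ = 0) (σ : F → R) (hσ : ∀ a, π (σ a) = a) :
    Nat.card {e : R // ϖ * e ^ 2 = ϖ} = 2 * Nat.card F := by
  classical
  have key : ∀ x : F × F, (x.1 = 1 ∨ x.1 = -1) ↔
      ϖ * (dec π ϖ hz hk hpi σ hσ x) ^ 2 = ϖ := by
    intro x
    have : ϖ * (dec π ϖ hz hk hpi σ hσ x) ^ 2 = ϖ ↔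
        ϖ * ((dec π ϖ hz hk hpi σ hσ x) ^ 2 - 1) = 0 := by
      rw [mul_sub, sub_eq_zero, mul_one]
    rw [this, hz]
    have hd : π (dec π ϖ hz hk hpi σ hσ x) = x.1 := by
      change π (σ x.1 + ϖ * σ x.2) = x.1
      simp [hσ, hpi]
    rw [map_sub, map_pow, hd, map_one, sub_eq_zero]
    simp
  rw [← Nat.card_congr ((dec π ϖ hz hk hpi σ hσ).subtypeEquiv key)]
  have e : {x : F × F // x.1 = 1 ∨ x.1 = -1} ≃ {a : F // a = 1 ∨ a = -1} × F :=
    { toFun := fun x => (⟨x.1.1, x.2⟩, x.1.2)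
      invFun := fun y => ⟨(y.1.1, y.2), y.1.2⟩
      left_inv := fun _ => rfl
      right_inv := fun _ => rfl }
  rw [Nat.card_congr e, Nat.card_prod]
  congr 1
  have h3 : (1 : F) ≠ -1 := by
    intro h
    apply h2
    linear_combination h
  rw [Nat.card_eq_fintype_card, Fintype.card_subtype]
  have : (Finset.univ.filter fun a : F => a = 1 ∨ a = -1) = {1, -1} := by
    ext; simp
  rw [this, Finset.card_pair h3]

lemma card_lift (h2 : (2 : F) ≠ 0) (π : R →+* F) (ϖ : R) (hz : ∀ r, ϖ * r = 0 ↔ π r = 0)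
    (hk : ∀ r, π r = 0 → ∃ s, r = ϖ * s) (hpi : π ϖ = 0) (σ : F → R) (hσ : ∀ a, π (σ a) = a)
    (n : ℕ) (Y : Matrix (Fin n) (Fin n) R) (hY : Yᵀ = Y) :
    Nat.card {A : Matrix (Fin n) (Fin n) R // Aᵀ * A = 1 + ϖ • Y} =
      Nat.card F ^ (n * (n - 1) / 2) *
        Nat.card {A : Matrix (Fin n) (Fin n) F // Aᵀ * A = 1} := by
  classical
  have hϖ : ϖ * ϖ = 0 := by rw [hz, hpi]
  -- matrix versions
  have hzM : ∀ M : Matrix (Fin n) (Fin n) R, ϖ • M = 0 ↔ M.map π = 0 := by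
    intro M
    simp only [← Matrix.ext_iff, Matrix.smul_apply, smul_eq_mul, hz, Matrix.map_apply,
      Matrix.zero_apply]
  have hkM : ∀ M : Matrix (Fin n) (Fin n) R, M.map π = 0 → ∃ N, M = ϖ • N := by
    intro M hM
    have h : ∀ i j, ∃ s, M i j = ϖ * s := fun i j => hk _ (by
      have := congrFun (congrFun hM i) j
      simpa using this)
    choose N hN using h
    exact ⟨Matrix.of N, by ext i j; simpa using hN i j⟩
  let s : Matrix (Fin n) (Fin n) F → Matrix (Fin n) (Fin n) R := fun A => A.map σ
  have hs : ∀ A, (s A).map π = A := by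
    intro A; ext i j; simp [s, hσ]
  have hZ : ∀ A : {A : Matrix (Fin n) (Fin n) F // Aᵀ * A = 1},
      ∃ Z : Matrix (Fin n) (Fin n) R, (s A.1)ᵀ * s A.1 - 1 = ϖ • Z := by
    intro A
    apply hkM
    rw [Matrix.map_sub _ (map_sub π), Matrix.map_mul, Matrix.transpose_map, hs A.1, A.2]
    simp
  choose Z hZ using hZ
  let dM : Matrix (Fin n) (Fin n) F × Matrix (Fin n) (Fin n) F ≃ Matrix (Fin n) (Fin n) R :=
    Equiv.ofBijective (fun x => s x.1 + ϖ • s x.2) (by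
      constructor
      · rintro ⟨a, x⟩ ⟨b, y⟩ h
        have h' : ∀ i j, (a i j, x i j) = (b i j, y i j) := by
          intro i j
          apply (dec π ϖ hz hk hpi σ hσ).injective
          have := congrFun (congrFun h i) j
          exact this
        simp only [Prod.mk.injEq] at h'
        ext i j
        · exact (h' i j).1
        · exact (h' i j).2
      · intro M
        refine ⟨(M.map fun r => ((dec π ϖ hz hk hpi σ hσ).symm r).1,
          M.map fun r => ((dec π ϖ hz hk hpi σ hσ).symm r).2), ?_⟩
        ext i j
        have := (dec π ϖ hz hk hpi σ hσ).apply_symm_apply (M i j)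
        exact this)
  have hdM : ∀ A X, dM (A, X) = s A + ϖ • s X := fun _ _ => rfl
  have expand : ∀ A X : Matrix (Fin n) (Fin n) F, (s A + ϖ • s X)ᵀ * (s A + ϖ • s X) =
      (s A)ᵀ * s A + ϖ • ((s A)ᵀ * s X + (s X)ᵀ * s A) := by
    intro A X
    simp only [Matrix.transpose_add, Matrix.transpose_smul, Matrix.add_mul, Matrix.mul_add,
      Matrix.smul_mul, Matrix.mul_smul, smul_smul, hϖ, zero_smul, smul_add]
    abel
  have key1 : ∀ A X : Matrix (Fin n) (Fin n) F, (dM (A, X))ᵀ * dM (A, X) = 1 + ϖ • Y →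
      Aᵀ * A = 1 := by
    intro A X h
    have h1 := congrArg (fun M => M.map π) h
    have h3 : ∀ N : Matrix (Fin n) (Fin n) R, (ϖ • N).map π = 0 := by
      intro N; ext i j; simp [hpi]
    simp only [hdM] at h1
    rw [expand, Matrix.map_add _ (map_add π), Matrix.map_add _ (map_add π), h3, h3,
      Matrix.map_mul, Matrix.transpose_map, hs A] at h1
    simpa using h1
  have key2 : ∀ (A : {A : Matrix (Fin n) (Fin n) F // Aᵀ * A = 1}) (X : Matrix (Fin n) (Fin n) F),
      (dM (A.1, X))ᵀ * dM (A.1, X) = 1 + ϖ • Y ↔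
        A.1ᵀ * X + (A.1ᵀ * X)ᵀ = (Y - Z A).map π := by
    intro A X
    have : (dM (A.1, X))ᵀ * dM (A.1, X) = 1 + ϖ • Y ↔
        ϖ • ((s A.1)ᵀ * s X + (s X)ᵀ * s A.1 - (Y - Z A)) = 0 := by
      simp only [hdM]
      rw [expand, ← sub_eq_zero, sub_eq_iff_eq_add.mp (hZ A)]
      apply Eq.congr _ rfl
      simp only [smul_add, smul_sub]
      abel
    rw [this, hzM, Matrix.map_sub _ (map_sub π), sub_eq_zero, Matrix.map_add _ (map_add π),
      Matrix.map_mul, Matrix.map_mul, Matrix.transpose_map, Matrix.transpose_map, hs A.1, hs X,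
      Matrix.transpose_mul, Matrix.transpose_transpose]
  have symm : ∀ A, ((Y - Z A).map π)ᵀ = (Y - Z A).map π := by
    intro A
    have h : ϖ • ((Z A)ᵀ - Z A) = 0 := by
      rw [smul_sub, ← Matrix.transpose_smul, ← hZ]
      simp
    rw [hzM, Matrix.map_sub _ (map_sub π), sub_eq_zero] at h
    rw [← Matrix.transpose_map, Matrix.transpose_sub, hY, Matrix.map_sub _ (map_sub π), h,
      Matrix.map_sub _ (map_sub π)]
  have e1 : {A : Matrix (Fin n) (Fin n) R // Aᵀ * A = 1 + ϖ • Y} ≃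
      Σ A : {A : Matrix (Fin n) (Fin n) F // Aᵀ * A = 1},
        {W : Matrix (Fin n) (Fin n) F // W + Wᵀ = (Y - Z A).map π} :=
    ((dM.subtypeEquiv (fun _ => Iff.rfl)).symm.trans
      { toFun := fun x => ⟨⟨x.1.1, key1 _ _ x.2⟩,
          ⟨x.1.1ᵀ * x.1.2, (key2 ⟨x.1.1, key1 _ _ x.2⟩ x.1.2).1 x.2⟩⟩
        invFun := fun y => ⟨(y.1.1, y.1.1 * y.2.1), (key2 y.1 _).2 (by
          rw [← Matrix.mul_assoc, y.1.2, Matrix.one_mul]; exact y.2.2)⟩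
        left_inv := fun x => by
          apply Subtype.ext
          apply Prod.ext
          · rfl
          · change x.1.1 * (x.1.1ᵀ * x.1.2) = x.1.2
            rw [← Matrix.mul_assoc, mul_eq_one_comm.mp (key1 _ _ x.2), Matrix.one_mul]
        right_inv := fun y => by
          obtain ⟨A, W⟩ := y
          refine Sigma.ext rfl (heq_of_eq ?_)
          apply Subtype.ext
          change A.1ᵀ * (A.1 * W.1) = W.1
          rw [← Matrix.mul_assoc, A.2, Matrix.one_mul] })
  rw [Nat.card_congr e1, Nat.card_sigma]
  simp only [card_skew h2 n _ (symm _)]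
  simp [Nat.card_eq_fintype_card, mul_comm]

lemma card_block (h2 : (2 : F) ≠ 0) (π : R →+* F) (ϖ : R) (hz : ∀ r, ϖ * r = 0 ↔ π r = 0)
    (hk : ∀ r, π r = 0 → ∃ s, r = ϖ * s) (hpi : π ϖ = 0) (σ : F → R) (hσ : ∀ a, π (σ a) = a)
    (n : ℕ) :
    Nat.card {M : Matrix (Fin n ⊕ Fin 1) (Fin n ⊕ Fin 1) R //
      Mᵀ * fromBlocks 1 0 0 (-(ϖ • 1)) * M = fromBlocks 1 0 0 (-(ϖ • 1))} =
      2 * Nat.card F ^ ((n + 1) * (n + 2) / 2) *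
        Nat.card {A : Matrix (Fin n) (Fin n) F // Aᵀ * A = 1} := by
  classical
  have hϖ : ϖ * ϖ = 0 := by rw [hz, hpi]
  have hinv : ∀ (A N : Matrix (Fin n) (Fin n) R), Aᵀ * A = 1 + ϖ • N →
      Aᵀ * (Aᵀ)⁻¹ = 1 ∧ (Aᵀ)⁻¹ * Aᵀ = 1 := by
    intro A N h
    have h1 : Aᵀ * (A * (1 - ϖ • N)) = 1 := by
      rw [← Matrix.mul_assoc, h]
      simp only [Matrix.add_mul, Matrix.mul_sub, Matrix.smul_mul, Matrix.mul_smul, smul_smul, hϖ,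
        Matrix.one_mul, Matrix.mul_one, zero_smul, smul_add, add_zero]
      abel
    have h3 : IsUnit (Aᵀ).det := Matrix.isUnit_det_of_right_inverse h1
    exact ⟨Matrix.mul_nonsing_inv _ h3, Matrix.nonsing_inv_mul _ h3⟩
  have hblk : ∀ (A : Matrix (Fin n) (Fin n) R) (b : Matrix (Fin n) (Fin 1) R)
      (c : Matrix (Fin 1) (Fin n) R) (e : Matrix (Fin 1) (Fin 1) R),
      (fromBlocks A b c e)ᵀ * fromBlocks 1 0 0 (-(ϖ • 1)) * fromBlocks A b c e
        = fromBlocks 1 0 0 (-(ϖ • 1)) ↔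
      (Aᵀ * A = 1 + ϖ • (cᵀ * c) ∧ b = ϖ • ((Aᵀ)⁻¹ * cᵀ * e) ∧ ϖ * (e 0 0) ^ 2 = ϖ) := by
    intro A b c e
    rw [Matrix.fromBlocks_transpose, Matrix.fromBlocks_multiply, Matrix.fromBlocks_multiply,
      Matrix.fromBlocks_inj]
    simp only [Matrix.mul_one, Matrix.mul_zero, add_zero, zero_add, Matrix.mul_neg, Matrix.neg_mul,
      Matrix.mul_smul, Matrix.smul_mul]
    simp only [← sub_eq_add_neg, sub_eq_iff_eq_add, zero_add]
    have hbb : b = ϖ • ((Aᵀ)⁻¹ * cᵀ * e) → bᵀ * b = 0 := by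
      intro h
      rw [h]
      simp only [Matrix.transpose_smul, Matrix.smul_mul, Matrix.mul_smul, smul_smul, hϖ, zero_smul]
    have hee : (0 : Matrix (Fin 1) (Fin 1) R) = -(ϖ • 1) + ϖ • (eᵀ * e) ↔
        ϖ * (e 0 0) ^ 2 = ϖ := by
      rw [eq_comm, neg_add_eq_zero, eq_comm, ← Matrix.ext_iff]
      simp [Fin.forall_fin_one, Matrix.mul_apply, sq]
    constructor
    · rintro ⟨h1, h3, h4, h5⟩
      have hb : b = ϖ • ((Aᵀ)⁻¹ * cᵀ * e) := by
        have := congrArg (fun X => (Aᵀ)⁻¹ * X) h3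
        simp only [← Matrix.mul_assoc, (hinv _ _ h1).2, Matrix.one_mul, Matrix.mul_smul] at this
        exact this
      refine ⟨h1, hb, hee.1 ?_⟩
      rw [← h5, hbb hb]
    · rintro ⟨h1, hb, h5⟩
      have h3 : Aᵀ * b = ϖ • (cᵀ * e) := by
        rw [hb, Matrix.mul_smul, ← Matrix.mul_assoc, ← Matrix.mul_assoc, (hinv _ _ h1).1,
          Matrix.one_mul]
      refine ⟨h1, h3, ?_, ?_⟩
      · have := congrArg Matrix.transpose h3
        simpa using this
      · rw [hbb hb]; exact hee.2 h5
  let U := {e : R // ϖ * e ^ 2 = ϖ} × Σ c : Matrix (Fin 1) (Fin n) R,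
    {A : Matrix (Fin n) (Fin n) R // Aᵀ * A = 1 + ϖ • (cᵀ * c)}
  let f : U → {M : Matrix (Fin n ⊕ Fin 1) (Fin n ⊕ Fin 1) R //
      Mᵀ * fromBlocks 1 0 0 (-(ϖ • 1)) * M = fromBlocks 1 0 0 (-(ϖ • 1))} := fun u =>
    ⟨fromBlocks u.2.2.1 (ϖ • ((u.2.2.1ᵀ)⁻¹ * u.2.1ᵀ * (Matrix.of fun _ _ => u.1.1))) u.2.1
      (Matrix.of fun _ _ => u.1.1), (hblk _ _ _ _).2 ⟨u.2.2.2, rfl, u.1.2⟩⟩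
  have hf : Function.Bijective f := by
    constructor
    · rintro ⟨⟨e, he⟩, c, A, hA⟩ ⟨⟨e', he'⟩, c', A', hA'⟩ h
      have h' := congrArg Subtype.val h
      simp only [f, Matrix.fromBlocks_inj] at h'
      obtain ⟨h1, -, h3, h4⟩ := h'
      have h5 : e = e' := congrFun (congrFun h4 0) 0
      subst h1 h3 h5
      rfl
    · rintro ⟨M, hM⟩
      have hM' := hM
      rw [← Matrix.fromBlocks_toBlocks M] at hM'
      rw [hblk] at hM'
      obtain ⟨h1, h3, h4⟩ := hM'
      refine ⟨(⟨_, h4⟩, ⟨M.toBlocks₂₁, ⟨M.toBlocks₁₁, h1⟩⟩), ?_⟩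
      apply Subtype.ext
      have he : (Matrix.of fun _ _ => M.toBlocks₂₂ 0 0) = M.toBlocks₂₂ := by
        ext i j
        rw [Subsingleton.elim i 0, Subsingleton.elim j 0]; rfl
      simp only [f]
      rw [he, ← h3, Matrix.fromBlocks_toBlocks]
  rw [← Nat.card_congr (Equiv.ofBijective f hf)]
  simp only [U]
  rw [Nat.card_prod, Nat.card_sigma, card_sq h2 π ϖ hz hk hpi σ hσ]
  have hc : ∀ c : Matrix (Fin 1) (Fin n) R, (cᵀ * c)ᵀ = cᵀ * c := fun c => by simp
  simp only [card_lift h2 π ϖ hz hk hpi σ hσ n _ (hc _)]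
  have hR : Fintype.card R = Fintype.card F ^ 2 := by
    rw [← Fintype.card_congr (dec π ϖ hz hk hpi σ hσ), Fintype.card_prod, sq]
  rw [Finset.sum_const, Finset.card_univ, smul_eq_mul]
  have hC : Fintype.card (Matrix (Fin 1) (Fin n) R) = Nat.card F ^ (2 * n) := by
    rw [Nat.card_eq_fintype_card, pow_mul, ← hR]
    change Fintype.card (Fin 1 → Fin n → R) = Fintype.card R ^ n
    rw [Fintype.card_fun, Fintype.card_fun]; simp
  rw [hC]
  have hexp : (n + 1) * (n + 2) / 2 = 1 + 2 * n + n * (n - 1) / 2 := by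
    have h : (n + 1) * (n + 2) = n * (n - 1) + 2 * (1 + 2 * n) := by
      cases n with
      | zero => rfl
      | succ k => simp; ring
    rw [h]; omega
  rw [hexp, pow_add, pow_add]
  ring

end Aux

theorem stmt4 (n p d : ℕ) (hp : p.Prime) (hpodd : Odd p) (hd : 0 < d)
    (hdodd : Odd d) (hsf : Squarefree d) (hpd : p ∣ d) :
    Nat.card {M : Matrix (Fin (n + 1)) (Fin (n + 1)) (ZMod (p ^ 2)) //
        Mᵀ * Matrix.diagonal (fun i : Fin (n + 1) => if (i : ℕ) = n then -(d : ZMod (p ^ 2)) else 1) * M =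
          Matrix.diagonal (fun i : Fin (n + 1) => if (i : ℕ) = n then -(d : ZMod (p ^ 2)) else 1)} =
      2 * p ^ ((n + 1) * (n + 2) / 2) *
        Nat.card {A : Matrix (Fin n) (Fin n) (ZMod p) // Aᵀ * A = 1} := by
  haveI : Fact p.Prime := ⟨hp⟩
  haveI : NeZero (p ^ 2) := ⟨pow_ne_zero _ hp.ne_zero⟩
  have hdvd : p ∣ p ^ 2 := dvd_pow_self p two_ne_zero
  let π : ZMod (p ^ 2) →+* ZMod p := ZMod.castHom hdvd (ZMod p)
  obtain ⟨u, hu⟩ := hpd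
  have hpu : ¬ p ∣ u := by
    intro h
    obtain ⟨v, rfl⟩ := h
    have := hsf p ⟨v, by rw [hu, mul_assoc]⟩
    exact hp.one_lt.ne' (Nat.isUnit_iff.mp this)
  have hcop : Nat.Coprime u (p ^ 2) :=
    ((Nat.Prime.coprime_iff_not_dvd hp).2 hpu).symm.pow_right 2
  have h2 : (2 : ZMod p) ≠ 0 := by
    intro h
    have : ((2 : ℕ) : ZMod p) = 0 := by exact_mod_cast h
    rw [ZMod.natCast_eq_zero_iff] at this
    have := (Nat.prime_dvd_prime_iff_eq hp Nat.prime_two).1 this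
    subst this
    exact absurd hpodd (by decide)
  have hpn : ∀ m : ℕ, π (m : ZMod (p ^ 2)) = (m : ZMod p) := fun m => map_natCast π m
  have hpi : π (d : ZMod (p ^ 2)) = 0 := by
    rw [hpn, ZMod.natCast_eq_zero_iff]; exact ⟨u, hu⟩
  have hz : ∀ r, (d : ZMod (p ^ 2)) * r = 0 ↔ π r = 0 := by
    intro r
    obtain ⟨m, rfl⟩ := ZMod.natCast_zmod_surjective r
    rw [hpn, ← Nat.cast_mul, ZMod.natCast_eq_zero_iff, ZMod.natCast_eq_zero_iff, hu, sq, mul_assoc,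
      Nat.mul_dvd_mul_iff_left hp.pos, hp.dvd_mul]
    tauto
  have hk : ∀ r, π r = 0 → ∃ s, r = (d : ZMod (p ^ 2)) * s := by
    intro r hr
    obtain ⟨m, rfl⟩ := ZMod.natCast_zmod_surjective r
    rw [hpn, ZMod.natCast_eq_zero_iff] at hr
    obtain ⟨k, rfl⟩ := hr
    refine ⟨(u : ZMod (p ^ 2))⁻¹ * k, ?_⟩
    have := ZMod.coe_mul_inv_eq_one u hcop
    rw [hu]
    push_cast
    linear_combination (-(p : ZMod (p ^ 2)) * k) * this
  have hσ : ∀ a : ZMod p, π ((a.val : ℕ) : ZMod (p ^ 2)) = a := by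
    intro a
    rw [hpn, ZMod.natCast_zmod_val]
  have main := Aux.card_block h2 π (d : ZMod (p ^ 2)) hz hk hpi _ hσ n
  rw [Nat.card_zmod] at main
  rw [← main]
  let E : Matrix (Fin (n + 1)) (Fin (n + 1)) (ZMod (p ^ 2)) ≃
      Matrix (Fin n ⊕ Fin 1) (Fin n ⊕ Fin 1) (ZMod (p ^ 2)) :=
    Matrix.reindex finSumFinEquiv.symm finSumFinEquiv.symm
  have hS : E (Matrix.diagonal
      (fun i : Fin (n + 1) => if (i : ℕ) = n then -(d : ZMod (p ^ 2)) else 1)) =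
      fromBlocks 1 0 0 (-((d : ZMod (p ^ 2)) • 1)) := by
    ext i j
    rcases i with i | i <;> rcases j with j | j
    · simp [E, Matrix.diagonal_apply, Matrix.one_apply, i.2.ne]
    · have h : Fin.castAdd 1 i ≠ Fin.natAdd n j := by
        intro h; have := congrArg Fin.val h; simp at this; omega
      simp [E, Matrix.diagonal_apply, h]
    · have h : Fin.natAdd n i ≠ Fin.castAdd 1 j := by
        intro h; have := congrArg Fin.val h; simp at this; omega
      simp [E, Matrix.diagonal_apply, h]
    · rw [Subsingleton.elim i 0, Subsingleton.elim j 0]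
      simp [E, Matrix.diagonal_apply]
  apply Nat.card_congr
  refine E.subtypeEquiv fun M => ?_
  rw [← hS, ← E.injective.eq_iff]
  simp only [E, Matrix.reindex_apply, Equiv.symm_symm, Matrix.transpose_submatrix,
    Matrix.submatrix_mul_equiv]
end

section
/- Let p be an odd prime dividing the odd square-free positive integer d, and let S = diag(1,...,1,-d) be an (n+1)×(n+1) matrix. Then E_{p³}(S) = p^{n(n+1)/2} · E_{p²}(S), where E_q(S) is the number of matrices A over ℤ/q with Aᵀ S A = S. -/
open Matrix


theorem aux_blocks {R : Type*} [CommRing R] (n : ℕ) (d h : R) (hd : d ^ 3 = 0) (hh : 2 * h = 1) :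
    Nat.card {M : Matrix (Fin n ⊕ Fin 1) (Fin n ⊕ Fin 1) R //
      Mᵀ * fromBlocks 1 0 0 (-(d • 1)) * M = fromBlocks 1 0 0 (-(d • 1))} =
    Nat.card (Matrix (Fin 1) (Fin n) R × {O : Matrix (Fin n) (Fin n) R // Oᵀ * O = 1} ×
      {x : R // d * x ^ 2 = d}) := by
  have h1 : ∀ X : Matrix (Fin 1) (Fin 1) R, X = X 0 0 • 1 := by
    intro X; ext i j; fin_cases i; fin_cases j; simp
  let s : Matrix (Fin 1) (Fin n) R → R := fun c => (c * cᵀ) 0 0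
  have hs : ∀ c, c * cᵀ = s c • 1 := fun c => h1 _
  let t : Matrix (Fin 1) (Fin n) R → R := fun c => d * h - d ^ 2 * s c * h ^ 3
  have ht : ∀ c, 2 * t c + t c ^ 2 * s c = d := by
    intro c
    simp only [t]
    linear_combination (d - d ^ 2 * s c * h ^ 2) * hh +
      (-2 * s c ^ 2 * h ^ 4 + d * s c ^ 3 * h ^ 6) * hd
  let r : Matrix (Fin 1) (Fin n) R → R := fun c => - t c + t c ^ 2 * s c
  have hr : ∀ c, t c + r c + t c * r c * s c = 0 := by
    intro c
    have : t c ^ 3 = 0 := by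
      simp only [t]
      linear_combination (h - d * s c * h ^ 3) ^ 3 * hd
    simp only [r]
    linear_combination s c ^ 2 * this
  have hN : ∀ c : Matrix (Fin 1) (Fin n) R, cᵀ * c * (cᵀ * c) = s c • (cᵀ * c) := by
    intro c
    rw [← Matrix.mul_assoc, Matrix.mul_assoc cᵀ c cᵀ, hs]; simp
  have hBC : ∀ c : Matrix (Fin 1) (Fin n) R,
      (1 + t c • (cᵀ * c)) * (1 + r c • (cᵀ * c)) = 1 := by
    intro c
    have : (1 + t c • (cᵀ * c)) * (1 + r c • (cᵀ * c)) =
      1 + (t c + r c + t c * r c * s c) • (cᵀ * c) := by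
      simp only [add_mul, mul_add, smul_mul_assoc, mul_smul_comm, hN, one_mul, mul_one, smul_smul]
      module
    rw [this, hr]; simp
  have hCB : ∀ c : Matrix (Fin 1) (Fin n) R,
      (1 + r c • (cᵀ * c)) * (1 + t c • (cᵀ * c)) = 1 := fun c => mul_eq_one_comm.mp (hBC c)
  have hBB : ∀ c : Matrix (Fin 1) (Fin n) R,
      (1 + t c • (cᵀ * c)) * (1 + t c • (cᵀ * c)) = 1 + d • (cᵀ * c) := by
    intro c
    conv_rhs => rw [← ht c]
    simp only [add_mul, mul_add, smul_mul_assoc, mul_smul_comm, hN, one_mul, mul_one, smul_smul]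
    module
  have hBT : ∀ (c : Matrix (Fin 1) (Fin n) R) (a : R),
      (1 + a • (cᵀ * c))ᵀ = 1 + a • (cᵀ * c) := by
    intro c a; simp
  have hBc : ∀ (c : Matrix (Fin 1) (Fin n) R) (a : R),
      (1 + a • (cᵀ * c)) * cᵀ = (1 + a * s c) • cᵀ := by
    intro c a
    rw [Matrix.add_mul, Matrix.smul_mul, Matrix.mul_assoc, hs]
    simp only [one_mul, Matrix.one_mul, Matrix.mul_smul, Matrix.mul_one, smul_smul]
    module
  have hsB : ∀ c, (1 + t c * s c) * (1 + r c * s c) = 1 := by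
    intro c; linear_combination s c * hr c
  have hsq : ∀ c, (1 + t c * s c) ^ 2 = 1 + d * s c := by
    intro c; linear_combination s c * ht c
  -- the block equations
  have key : ∀ (A : Matrix (Fin n) (Fin n) R) (b : Matrix (Fin n) (Fin 1) R)
      (c : Matrix (Fin 1) (Fin n) R) (e : R),
      (fromBlocks A b c (e • 1))ᵀ * fromBlocks 1 0 0 (-(d • 1)) * fromBlocks A b c (e • 1)
        = fromBlocks 1 0 0 (-(d • 1)) ↔
      Aᵀ * A = 1 + d • (cᵀ * c) ∧ Aᵀ * b = (d * e) • cᵀ ∧ bᵀ * b = (d * e ^ 2 - d) • 1 := by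
    intro A b c e
    rw [fromBlocks_transpose, fromBlocks_multiply, fromBlocks_multiply, fromBlocks_inj]
    simp only [Matrix.mul_one, Matrix.mul_zero, add_zero, zero_add, Matrix.mul_neg, Matrix.neg_mul,
      Matrix.mul_smul, Matrix.smul_mul, transpose_smul, transpose_one, Matrix.one_mul, smul_smul]
    constructor
    · rintro ⟨e1, e2, e3, e4⟩
      refine ⟨?_, ?_, ?_⟩
      · rw [← e1]; module
      · rw [← sub_eq_zero, ← e2]; module
      · rw [sub_smul, sub_eq_add_neg, ← e4]; module
    · rintro ⟨e1, e2, e3⟩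
      have e2' : bᵀ * A = (d * e) • c := by
        have := congrArg transpose e2
        simpa using this
      refine ⟨?_, ?_, ?_, ?_⟩
      · rw [e1]; module
      · rw [e2]; module
      · rw [e2']; module
      · rw [e3]; module
  symm
  let F : Matrix (Fin 1) (Fin n) R × {O : Matrix (Fin n) (Fin n) R // Oᵀ * O = 1} ×
      {x : R // d * x ^ 2 = d} → {M : Matrix (Fin n ⊕ Fin 1) (Fin n ⊕ Fin 1) R //
      Mᵀ * fromBlocks 1 0 0 (-(d • 1)) * M = fromBlocks 1 0 0 (-(d • 1))} := fun q =>
    ⟨fromBlocks (q.2.1.1 * (1 + t q.1 • (q.1ᵀ * q.1))) ((d * q.2.2.1) • (q.2.1.1 * q.1ᵀ)) q.1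
      ((q.2.2.1 * (1 + t q.1 * s q.1)) • 1), by
      obtain ⟨c, ⟨O, hO⟩, ⟨x, hx⟩⟩ := q
      dsimp only
      rw [key]
      refine ⟨?_, ?_, ?_⟩
      · rw [transpose_mul, hBT, Matrix.mul_assoc, ← Matrix.mul_assoc Oᵀ, hO, Matrix.one_mul, hBB]
      · rw [transpose_mul, hBT, Matrix.mul_smul, Matrix.mul_assoc, ← Matrix.mul_assoc Oᵀ, hO,
          Matrix.one_mul, hBc, smul_smul, mul_assoc]
      · rw [transpose_smul, transpose_mul, transpose_transpose, Matrix.smul_mul, Matrix.mul_smul,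
          Matrix.mul_assoc, ← Matrix.mul_assoc Oᵀ, hO, Matrix.one_mul, hs, smul_smul, smul_smul]
        congr 1
        linear_combination (-d * x ^ 2) * hsq c - hx⟩
  refine Nat.card_eq_of_bijective F ⟨?_, ?_⟩
  · rintro ⟨c, ⟨O, hO⟩, ⟨x, hx⟩⟩ ⟨c', ⟨O', hO'⟩, ⟨x', hx'⟩⟩ hF
    have hF := congrArg Subtype.val hF
    dsimp only [F] at hF
    rw [fromBlocks_inj] at hF
    obtain ⟨e1, e2, rfl, e4⟩ := hF
    have eO : O = O' := by
      have := congrArg (· * (1 + r c • (cᵀ * c))) e1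
      simpa only [Matrix.mul_assoc, hBC, Matrix.mul_one] using this
    have ex : x = x' := by
      have := congrFun (congrFun e4 0) 0
      simp only [Matrix.smul_apply, one_apply_eq, smul_eq_mul, mul_one] at this
      linear_combination (1 + r c * s c) * this + (x' - x) * hsB c
    subst eO ex
    rfl
  · rintro ⟨M, hM⟩
    obtain ⟨A, b, c, e, rfl⟩ : ∃ A b c, ∃ e : R, M = fromBlocks A b c (e • 1) :=
      ⟨M.toBlocks₁₁, M.toBlocks₁₂, M.toBlocks₂₁, M.toBlocks₂₂ 0 0, by
        rw [← h1, fromBlocks_toBlocks]⟩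
    obtain ⟨e1, e2, e3⟩ := (key _ _ _ _).mp hM
    have hO : (A * (1 + r c • (cᵀ * c)))ᵀ * (A * (1 + r c • (cᵀ * c))) = 1 := by
      rw [transpose_mul, hBT, Matrix.mul_assoc, ← Matrix.mul_assoc Aᵀ, e1, ← hBB,
        Matrix.mul_assoc, hBC, Matrix.mul_one, hCB]
    have hb : b = (d * (e * (1 + r c * s c))) • ((A * (1 + r c • (cᵀ * c))) * cᵀ) := by
      have hO' := mul_eq_one_comm.mp hO
      have : (A * (1 + r c • (cᵀ * c)))ᵀ * b = (d * (e * (1 + r c * s c))) • cᵀ := by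
        rw [transpose_mul, hBT, Matrix.mul_assoc, e2, Matrix.mul_smul, hBc, smul_smul, mul_assoc]
      rw [← Matrix.mul_smul, ← this, ← Matrix.mul_assoc, hO', Matrix.one_mul]
    have hx : d * (e * (1 + r c * s c)) ^ 2 = d := by
      have e4 := congrFun (congrFun e3 0) 0
      have e5 : bᵀ * b = ((d * (e * (1 + r c * s c))) ^ 2 * s c) • 1 := by
        rw [hb, transpose_smul, transpose_mul, transpose_transpose, Matrix.smul_mul,
          Matrix.mul_smul, Matrix.mul_assoc, ← Matrix.mul_assoc _ _ cᵀ, hO, Matrix.one_mul, hs,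
          smul_smul, smul_smul]
        congr 1; ring
      rw [e5] at e4
      simp only [Matrix.smul_apply, one_apply_eq, smul_eq_mul, mul_one] at e4
      have e6 : e ^ 2 = (e * (1 + r c * s c)) ^ 2 * (1 + d * s c) := by
        rw [← hsq]
        linear_combination (-e ^ 2 * ((1 + t c * s c) * (1 + r c * s c) + 1)) * hsB c
      linear_combination -e4 - d * e6
    refine ⟨⟨c, ⟨A * (1 + r c • (cᵀ * c)), hO⟩, ⟨e * (1 + r c * s c), hx⟩⟩, ?_⟩
    apply Subtype.ext
    dsimp only [F]
    rw [fromBlocks_inj]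
    refine ⟨?_, hb.symm, rfl, ?_⟩
    · rw [Matrix.mul_assoc, hCB, Matrix.mul_one]
    · congr 1
      linear_combination e * hsB c


theorem aux_skew {R : Type*} [CommRing R] [Finite R] (n : ℕ) (h : R) (hh : 2 * h = 1) (I : Ideal R) :
    Nat.card {Z : Matrix (Fin n) (Fin n) R // (∀ i j, Z i j ∈ I) ∧ Zᵀ = -Z} =
      Nat.card I ^ (n.choose 2) := by
  have hcard : Nat.card {q : Fin n × Fin n // q.1 < q.2} = n.choose 2 := by
    have e : Nat.card {q : Fin n × Fin n // q.1 < q.2} = ∑ i ∈ Finset.range n, i := by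
      rw [Finset.sum_range]
      rw [Nat.card_congr (β := Σ j : Fin n, Fin j)]
      · simp [Nat.card_sigma]
      · exact ⟨fun q => ⟨q.1.2, ⟨q.1.1, q.2⟩⟩, fun q => ⟨(⟨q.2, q.2.2.trans q.1.2⟩, q.1), q.2.2⟩,
          fun q => rfl, fun q => rfl⟩
    rw [e, Finset.sum_range_id, Nat.choose_two_right]
  rw [← hcard, ← Nat.card_fun]
  refine Nat.card_eq_of_bijective
    (fun Z q => ⟨Z.1 q.1.1 q.1.2, Z.2.1 _ _⟩) ⟨?_, ?_⟩
  · rintro ⟨Z, hZ, hZ'⟩ ⟨W, hW, hW'⟩ hq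
    apply Subtype.ext
    have h0 : ∀ i j, i < j → Z i j = W i j := fun i j hij =>
      congrArg Subtype.val (congrFun hq ⟨(i, j), hij⟩)
    have hZ1 : ∀ i j, Z j i = - Z i j := fun i j => congrFun (congrFun hZ' i) j
    have hW1 : ∀ i j, W j i = - W i j := fun i j => congrFun (congrFun hW' i) j
    ext i j
    rcases lt_trichotomy i j with hij | rfl | hij
    · exact h0 _ _ hij
    · linear_combination h * hZ1 i i - h * hW1 i i - (Z i i - W i i) * hh
    · change Z i j = W i j
      rw [hZ1 j i, hW1 j i, h0 _ _ hij]
  · intro f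
    refine ⟨⟨Matrix.of fun i j => if hij : i < j then f ⟨(i, j), hij⟩ else
      if hij : j < i then -f ⟨(j, i), hij⟩ else 0, ?_, ?_⟩, ?_⟩
    · intro i j
      simp only [of_apply]
      split_ifs
      · exact (f _).2
      · exact I.neg_mem (f _).2
      · exact I.zero_mem
    · ext i j
      simp only [transpose_apply, Matrix.neg_apply, of_apply]
      rcases lt_trichotomy i j with hij | rfl | hij
      · simp [hij, hij.not_gt]
      · simp
      · simp [hij, hij.not_gt]
    · funext q
      apply Subtype.ext
      simp [q.2]

theorem aux_orth {R T : Type*} [CommRing R] [CommRing T] [Finite R] [Finite T] (n : ℕ) (h : R)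
    (hh : 2 * h = 1) (f : R →+* T) (hf : Function.Surjective f)
    (hI : ∀ x y, f x = 0 → f y = 0 → x * y = 0) :
    Nat.card {O : Matrix (Fin n) (Fin n) R // Oᵀ * O = 1} =
      Nat.card (RingHom.ker f) ^ (n.choose 2) *
        Nat.card {O : Matrix (Fin n) (Fin n) T // Oᵀ * O = 1} := by
  have hsmall : ∀ X Y : Matrix (Fin n) (Fin n) R, X.map f = 0 → Y.map f = 0 → X * Y = 0 := by
    intro X Y hX hY
    ext i j
    rw [mul_apply]
    exact Finset.sum_eq_zero fun k _ =>
      hI _ _ (congrFun (congrFun hX i) k) (congrFun (congrFun hY k) j)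
  have hmapmul : ∀ X Y : Matrix (Fin n) (Fin n) R, (X * Y).map f = X.map f * Y.map f :=
    fun X Y => Matrix.map_mul
  have hmap1 : (1 : Matrix (Fin n) (Fin n) R).map f = 1 := by simp
  have hmapadd : ∀ X Y : Matrix (Fin n) (Fin n) R, (X + Y).map f = X.map f + Y.map f :=
    fun X Y => by ext; simp
  have hmapsub : ∀ X Y : Matrix (Fin n) (Fin n) R, (X - Y).map f = X.map f - Y.map f :=
    fun X Y => by ext; simp
  have hmapT : ∀ X : Matrix (Fin n) (Fin n) R, Xᵀ.map f = (X.map f)ᵀ := fun X => rfl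
  have hsurj : ∀ P : {O : Matrix (Fin n) (Fin n) T // Oᵀ * O = 1},
      ∃ O : Matrix (Fin n) (Fin n) R, Oᵀ * O = 1 ∧ O.map f = P.1 := by
    rintro ⟨P, hP⟩
    choose g hg using hf
    obtain ⟨L, hL⟩ : ∃ L : Matrix (Fin n) (Fin n) R, L.map f = P :=
      ⟨P.map g, by ext; simp [hg]⟩
    obtain ⟨X, hX⟩ : ∃ X, X = Lᵀ * L - 1 := ⟨_, rfl⟩
    have hX0 : X.map f = 0 := by
      rw [hX, hmapsub, hmapmul, hmap1, hmapT, hL, hP, sub_self]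
    have hXT : Xᵀ = X := by rw [hX]; simp
    have hhX : (h • X).map f = 0 := by
      ext i j
      have := congrFun (congrFun hX0 i) j
      simp only [map_apply, Matrix.zero_apply] at this
      simp [this]
    have hLL : Lᵀ * L = 1 + X := by rw [hX]; abel
    refine ⟨L * (1 - h • X), ?_, ?_⟩
    · have hz : X * X = 0 := hsmall _ _ hX0 hX0
      have h2 : h • X + h • X = X := by rw [← add_smul, ← two_mul, hh, one_smul]
      rw [transpose_mul, Matrix.mul_assoc, ← Matrix.mul_assoc Lᵀ, hLL]
      simp only [transpose_sub, transpose_one, transpose_smul, hXT]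
      simp only [add_mul, mul_sub, sub_mul, smul_mul_assoc, mul_smul_comm, one_mul, mul_one,
        mul_add, hz, smul_zero, mul_zero]
      linear_combination (norm := module) (-1 : R) • h2
    · rw [hmapmul, hmapsub, hhX, hmap1, sub_zero, Matrix.mul_one, hL]
  choose G hG hGm using hsurj
  rw [← aux_skew n h hh, ← Nat.card_prod]
  symm
  refine Nat.card_eq_of_bijective (fun q => ⟨G q.2 * (1 + q.1.1), ?_⟩) ⟨?_, ?_⟩
  · obtain ⟨⟨Z, hZ, hZT⟩, P⟩ := q
    have hZ0 : Z.map f = 0 := by ext i j; exact hZ i j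
    have hz : Z * Z = 0 := hsmall _ _ hZ0 hZ0
    dsimp only
    rw [transpose_mul, Matrix.mul_assoc, ← Matrix.mul_assoc (G P)ᵀ, hG, Matrix.one_mul]
    simp only [transpose_add, transpose_one, hZT, add_mul, mul_add, one_mul, mul_one, neg_mul, hz]
    abel
  · rintro ⟨⟨Z, hZ, hZT⟩, P⟩ ⟨⟨W, hW, hWT⟩, Q⟩ hq
    have hq := congrArg Subtype.val hq
    dsimp only at hq
    have hZ0 : Z.map f = 0 := by ext i j; exact hZ i j
    have hW0 : W.map f = 0 := by ext i j; exact hW i j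
    have hPQ : P = Q := by
      have := congrArg (fun X => Matrix.map X f) hq
      simp only [hmapmul, hmapadd, hmap1, hZ0, hW0, add_zero, Matrix.mul_one, hGm] at this
      exact Subtype.ext this
    subst hPQ
    have := congrArg ((G P)ᵀ * ·) hq
    simp only [← Matrix.mul_assoc, hG, Matrix.one_mul, add_right_inj] at this
    subst this
    rfl
  · rintro ⟨O, hO⟩
    let P : {O : Matrix (Fin n) (Fin n) T // Oᵀ * O = 1} := ⟨O.map f, by
      rw [← hmapT, ← hmapmul, hO, hmap1]⟩
    obtain ⟨Z, hZ⟩ : ∃ Z, Z = (G P)ᵀ * O - 1 := ⟨_, rfl⟩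
    have hZ0 : Z.map f = 0 := by
      rw [hZ, hmapsub, hmapmul, hmap1, hmapT, hGm]
      have := P.2
      simp only [P] at this ⊢
      rw [this, sub_self]
    have hGZ : G P * (1 + Z) = O := by
      rw [hZ, add_sub_cancel, ← Matrix.mul_assoc, mul_eq_one_comm.mp (hG P), Matrix.one_mul]
    refine ⟨⟨⟨Z, fun i j => congrFun (congrFun hZ0 i) j, ?_⟩, P⟩, Subtype.ext hGZ⟩
    have hZT0 : Zᵀ.map f = 0 := by rw [hmapT, hZ0, transpose_zero]
    have hz : Zᵀ * Z = 0 := hsmall _ _ hZT0 hZ0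
    have := hO
    rw [← hGZ, transpose_mul, Matrix.mul_assoc, ← Matrix.mul_assoc (G P)ᵀ, hG, Matrix.one_mul] at this
    simp only [transpose_add, transpose_one, add_mul, mul_add, one_mul, mul_one, hz] at this
    rw [eq_neg_iff_add_eq_zero, ← sub_eq_zero.mpr this]
    abel


theorem aux_ker (p k : ℕ) (hp : p.Prime) :
    Nat.card {y : ZMod (p ^ (k + 1)) // (p : ZMod (p ^ (k + 1))) * y = 0} = p := by
  have : NeZero (p ^ (k + 1)) := ⟨pow_ne_zero _ hp.ne_zero⟩
  have h := IsAddCyclic.card_nsmulAddMonoidHom_ker (G := ZMod (p ^ (k + 1))) p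
  rw [Nat.card_zmod, Nat.gcd_eq_right (dvd_pow_self p (Nat.succ_ne_zero k))] at h
  refine Eq.trans ?_ h
  refine Nat.card_congr (Equiv.subtypeEquivRight fun y => ?_)
  simp [AddMonoidHom.mem_ker, nsmul_eq_mul]

theorem aux_scalar (p d k : ℕ) (hp : p.Prime) (hpodd : Odd p) (hsf : Squarefree d) (hpd : p ∣ d) :
    Nat.card {x : ZMod (p ^ (k + 2)) // (d : ZMod (p ^ (k + 2))) * x ^ 2 = d} = 2 * p := by
  have : NeZero (p ^ (k + 2)) := ⟨pow_ne_zero _ hp.ne_zero⟩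
  have hp2 : ¬ p ∣ 2 := fun h => by
    have := (Nat.prime_dvd_prime_iff_eq hp Nat.prime_two).mp h
    subst this
    exact absurd hpodd (by decide)
  have hpZ : Prime (p : ℤ) := Nat.prime_iff_prime_int.mp hp
  obtain ⟨u, rfl⟩ := hpd
  have hu : ¬ p ∣ u := fun h => by
    have := hsf p (Nat.mul_dvd_mul_left p h)
    exact hp.one_lt.ne' (Nat.isUnit_iff.mp this)
  have key : ∀ x : ZMod (p ^ (k + 2)), ((p * u : ℕ) : ZMod (p ^ (k + 2))) * x ^ 2 = (p * u : ℕ) ↔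
      (p : ZMod (p ^ (k + 2))) * (x - 1) = 0 ∨ (p : ZMod (p ^ (k + 2))) * (x + 1) = 0 := by
    intro x
    obtain ⟨m, rfl⟩ := ZMod.intCast_surjective x
    constructor
    · intro h
      have h1 : ((p * u * (m ^ 2 - 1) : ℤ) : ZMod (p ^ (k + 2))) = 0 := by
        push_cast at h ⊢
        linear_combination h
      rw [ZMod.intCast_zmod_eq_zero_iff_dvd] at h1
      have h2 : (p : ℤ) ^ (k + 1) ∣ (m - 1) * (m + 1) := by
        have : (p : ℤ) * p ^ (k + 1) ∣ p * (u * ((m - 1) * (m + 1))) := by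
          convert h1 using 1
          · push_cast; ring
          · ring
        have := (mul_dvd_mul_iff_left hpZ.ne_zero).mp this
        refine IsCoprime.dvd_of_dvd_mul_left ?_ this
        refine IsCoprime.pow_left ?_
        exact Nat.isCoprime_iff_coprime.mpr ((Nat.Prime.coprime_iff_not_dvd hp).mpr hu)
      have h3 : (p : ℤ) ^ (k + 1) ∣ (m - 1) ∨ (p : ℤ) ^ (k + 1) ∣ (m + 1) := by
        by_cases hm : (p : ℤ) ∣ m - 1
        · left
          refine IsCoprime.dvd_of_dvd_mul_right (IsCoprime.pow_left ?_) h2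
          refine (Prime.coprime_iff_not_dvd hpZ).mpr fun hm' => hp2 ?_
          have : (p : ℤ) ∣ 2 := by
            have := dvd_sub hm' hm
            ring_nf at this
            exact this
          exact_mod_cast this
        · right
          exact IsCoprime.dvd_of_dvd_mul_left
            (IsCoprime.pow_left ((Prime.coprime_iff_not_dvd hpZ).mpr hm)) h2
      have h4 : ∀ z : ℤ, (p : ℤ) ^ (k + 1) ∣ z → (p : ZMod (p ^ (k + 2))) * (z : ZMod _) = 0 := by
        rintro z ⟨w, rfl⟩
        have : ((p ^ (k + 2) : ℕ) : ZMod (p ^ (k + 2))) = 0 := ZMod.natCast_self _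
        push_cast at this ⊢
        linear_combination (w : ZMod (p ^ (k + 2))) * this
      rcases h3 with h | h
      · left; have := h4 _ h; push_cast at this; exact this
      · right; have := h4 _ h; push_cast at this; exact this
    · push_cast
      rintro (h | h)
      · linear_combination (u : ZMod (p ^ (k + 2))) * (m + 1) * h
      · linear_combination (u : ZMod (p ^ (k + 2))) * (m - 1) * h
  have h2p : ¬ (p : ZMod (p ^ (k + 2))) * 2 = 0 := by
    intro h
    have h1 : ((p * 2 : ℕ) : ZMod (p ^ (k + 2))) = 0 := by push_cast; exact h
    rw [ZMod.natCast_eq_zero_iff] at h1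
    have h2 : p * p ∣ p * 2 := dvd_trans ⟨p ^ k, by ring⟩ h1
    exact hp2 (Nat.dvd_of_mul_dvd_mul_left hp.pos h2)
  conv_rhs => rw [← aux_ker p (k + 1) hp, show 2 = Nat.card Bool by simp, ← Nat.card_prod]
  symm
  refine Nat.card_eq_of_bijective
    (fun q => ⟨(if q.1 then 1 else -1) + q.2.1, ?_⟩) ⟨?_, ?_⟩
  · obtain ⟨b, y, hy⟩ := q
    rw [key]
    cases b
    · right; simpa using hy
    · left; simpa using hy
  · rintro ⟨b, y, hy⟩ ⟨b', y', hy'⟩ h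
    have h := congrArg Subtype.val h
    cases b <;> cases b' <;> simp at h
    · subst h; rfl
    · exact absurd (by linear_combination -(p : ZMod (p ^ (k + 2))) * h + hy - hy') h2p
    · exact absurd (by linear_combination (p : ZMod (p ^ (k + 2))) * h - hy + hy') h2p
    · subst h; rfl
  · rintro ⟨x, hx⟩
    rcases (key x).mp hx with h | h
    · exact ⟨⟨true, x - 1, h⟩, Subtype.ext (by simp)⟩
    · exact ⟨⟨false, x + 1, h⟩, Subtype.ext (by simp)⟩

theorem aux_total (n p d k : ℕ) (hp : p.Prime) (hpodd : Odd p)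
    (hsf : Squarefree d) (hpd : p ∣ d) (hk : k + 2 ≤ 3) :
    Nat.card {M : Matrix (Fin (n + 1)) (Fin (n + 1)) (ZMod (p ^ (k + 2))) //
        Mᵀ * Matrix.diagonal (fun i : Fin (n + 1) => if (i : ℕ) = n then -(d : ZMod (p ^ (k + 2))) else 1) * M =
          Matrix.diagonal (fun i : Fin (n + 1) => if (i : ℕ) = n then -(d : ZMod (p ^ (k + 2))) else 1)} =
      (p ^ (k + 2)) ^ n *
        (Nat.card {O : Matrix (Fin n) (Fin n) (ZMod (p ^ (k + 2))) // Oᵀ * O = 1} * (2 * p)) := by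
  have : NeZero (p ^ (k + 2)) := ⟨pow_ne_zero _ hp.ne_zero⟩
  have hd : (d : ZMod (p ^ (k + 2))) ^ 3 = 0 := by
    rw [← Nat.cast_pow, ZMod.natCast_eq_zero_iff]
    exact (pow_dvd_pow p hk).trans (pow_dvd_pow_of_dvd hpd 3)
  obtain ⟨h, hh⟩ : ∃ h : ZMod (p ^ (k + 2)), 2 * h = 1 := by
    have hc : Nat.Coprime 2 (p ^ (k + 2)) := Nat.Coprime.pow_right _ (Nat.coprime_two_left.mpr hpodd)
    have := ZMod.coe_mul_inv_eq_one 2 hc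
    exact ⟨_, by simpa using this⟩
  have hb := aux_blocks n (d : ZMod (p ^ (k + 2))) h hd hh
  rw [Nat.card_prod, Nat.card_prod, aux_scalar p d k hp hpodd hsf hpd] at hb
  have hc : Nat.card (Matrix (Fin 1) (Fin n) (ZMod (p ^ (k + 2)))) = (p ^ (k + 2)) ^ n := by
    unfold Matrix
    simp [Nat.card_fun, Nat.card_zmod]
  rw [hc] at hb
  rw [← hb]
  have hS : Matrix.diagonal (fun i : Fin (n + 1) => if (i : ℕ) = n then -(d : ZMod (p ^ (k + 2))) else 1)
      = Matrix.reindexAlgEquiv (ZMod (p ^ (k + 2))) (ZMod (p ^ (k + 2))) finSumFinEquiv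
        (fromBlocks (1 : Matrix (Fin n) (Fin n) (ZMod (p ^ (k + 2)))) 0 0
          (-((d : ZMod (p ^ (k + 2))) • (1 : Matrix (Fin 1) (Fin 1) _)))) := by
    rw [← AlgEquiv.symm_apply_eq]
    ext i j
    rcases i with i | i <;> rcases j with j | j
    · have := i.2.ne
      simp [diagonal_apply, one_apply, Fin.ext_iff, this]
    · have := i.2.ne
      simp [diagonal_apply, Fin.ext_iff, this]
    · have := j.2.ne'
      simp [diagonal_apply, Fin.ext_iff, this]
    · fin_cases i; fin_cases j; simp [diagonal_apply]
  rw [hS]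
  symm
  refine Nat.card_congr (Equiv.subtypeEquiv
    (Matrix.reindexAlgEquiv (ZMod (p ^ (k + 2))) (ZMod (p ^ (k + 2))) finSumFinEquiv).toEquiv ?_)
  intro M
  have hT : ((Matrix.reindexAlgEquiv (ZMod (p ^ (k + 2))) (ZMod (p ^ (k + 2))) finSumFinEquiv) M)ᵀ
    = (Matrix.reindexAlgEquiv (ZMod (p ^ (k + 2))) (ZMod (p ^ (k + 2))) finSumFinEquiv) Mᵀ := rfl
  change _ ↔ ((Matrix.reindexAlgEquiv (ZMod (p ^ (k + 2))) (ZMod (p ^ (k + 2))) finSumFinEquiv) M)ᵀ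
    * _ * (Matrix.reindexAlgEquiv (ZMod (p ^ (k + 2))) (ZMod (p ^ (k + 2))) finSumFinEquiv) M = _
  rw [hT, ← map_mul, ← map_mul, EmbeddingLike.apply_eq_iff_eq]

theorem aux_orth_zmod (n p : ℕ) (hp : p.Prime) (hpodd : Odd p) :
    Nat.card {O : Matrix (Fin n) (Fin n) (ZMod (p ^ 3)) // Oᵀ * O = 1} =
      p ^ (n.choose 2) * Nat.card {O : Matrix (Fin n) (Fin n) (ZMod (p ^ 2)) // Oᵀ * O = 1} := by
  have : NeZero (p ^ 3) := ⟨pow_ne_zero _ hp.ne_zero⟩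
  have : NeZero (p ^ 2) := ⟨pow_ne_zero _ hp.ne_zero⟩
  obtain ⟨h, hh⟩ : ∃ h : ZMod (p ^ 3), 2 * h = 1 := by
    have hc : Nat.Coprime 2 (p ^ 3) := Nat.Coprime.pow_right _ (Nat.coprime_two_left.mpr hpodd)
    have := ZMod.coe_mul_inv_eq_one 2 hc
    exact ⟨_, by simpa using this⟩
  have hdiv : p ^ 2 ∣ p ^ 3 := pow_dvd_pow p (by norm_num)
  have hsur := ZMod.castHom_surjective hdiv
  have hker : ∀ x : ZMod (p ^ 3), ZMod.castHom hdiv (ZMod (p ^ 2)) x = 0 → ∃ w, x = (p : ZMod (p ^ 3)) ^ 2 * w := by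
    intro x hx
    obtain ⟨m, rfl⟩ := ZMod.natCast_zmod_surjective x
    rw [map_natCast, ZMod.natCast_eq_zero_iff] at hx
    obtain ⟨w, rfl⟩ := hx
    exact ⟨w, by push_cast; ring⟩
  have hp3 : (p : ZMod (p ^ 3)) ^ 3 = 0 := by
    rw [← Nat.cast_pow]; exact ZMod.natCast_self _
  rw [aux_orth n h hh (ZMod.castHom hdiv (ZMod (p ^ 2))) hsur]
  · congr 2
    have h1 := AddSubgroup.card_mul_index (ZMod.castHom hdiv (ZMod (p ^ 2))).toAddMonoidHom.ker
    rw [AddSubgroup.index_ker, AddMonoidHom.range_eq_top.mpr hsur, AddSubgroup.card_top,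
      Nat.card_zmod, Nat.card_zmod] at h1
    have h2 : Nat.card (RingHom.ker (ZMod.castHom hdiv (ZMod (p ^ 2)))) * p ^ 2 = p * p ^ 2 := by
      rw [← pow_succ']; exact h1
    exact Nat.eq_of_mul_eq_mul_right (pow_pos hp.pos 2) h2
  · intro x y hx hy
    obtain ⟨v, rfl⟩ := hker x hx
    obtain ⟨w, rfl⟩ := hker y hy
    linear_combination p * v * w * hp3

/-- For an odd prime `p` dividing the odd square-free positive integer `d`, with
`S = diag(1,…,1,-d)` of size `(n+1)×(n+1)`, `E_{p³}(S) = p^{n(n+1)/2} · E_{p²}(S)`. -/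
theorem stmt5 (n p d : ℕ) (hp : p.Prime) (hpodd : Odd p) (hd : 0 < d)
    (hdodd : Odd d) (hsf : Squarefree d) (hpd : p ∣ d) :
    Nat.card {M : Matrix (Fin (n + 1)) (Fin (n + 1)) (ZMod (p ^ 3)) //
        Mᵀ * Matrix.diagonal (fun i : Fin (n + 1) => if (i : ℕ) = n then -(d : ZMod (p ^ 3)) else 1) * M =
          Matrix.diagonal (fun i : Fin (n + 1) => if (i : ℕ) = n then -(d : ZMod (p ^ 3)) else 1)} =
      p ^ (n * (n + 1) / 2) *
        Nat.card {M : Matrix (Fin (n + 1)) (Fin (n + 1)) (ZMod (p ^ 2)) //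
          Mᵀ * Matrix.diagonal (fun i : Fin (n + 1) => if (i : ℕ) = n then -(d : ZMod (p ^ 2)) else 1) * M =
            Matrix.diagonal (fun i : Fin (n + 1) => if (i : ℕ) = n then -(d : ZMod (p ^ 2)) else 1)} := by
  rw [aux_total n p d 1 hp hpodd hsf hpd (by norm_num),
    aux_total n p d 0 hp hpodd hsf hpd (by norm_num), aux_orth_zmod n p hp hpodd]
  have hn : n * (n + 1) / 2 = n + n.choose 2 := by
    have h1 := Nat.choose_succ_succ' n 1
    rw [Nat.choose_one_right, show 1 + 1 = 2 from rfl, Nat.choose_two_right (n + 1),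
      Nat.add_sub_cancel] at h1
    rw [← h1, mul_comm]
  rw [hn]
  simp only [zero_add]
  ring
end
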